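/- arXiv:1410.2637 — 2 statements merged into one kernel-verified Lean document; each statement's English description precedes it below -/
import Mathlib

section
/- Let ν ≥ 1 be an integer and (M_k)_{k∈ℕ} a sequence of positive reals satisfying (M.0), (M.1), (M.2) and (G), with associated function M(r) := sup_{k∈ℕ} log(r^{νk}/M_{νk}). Let (λ_j)_{j≥1} be positive reals with λ_j ≥ λ₁ > 0 for all j and ∑_{j≥1} λ_j^{−p₀} < ∞ for some p₀ ∈ ℕ, and let (a_j)_{j≥1} be nonnegative reals. Then the following are equivalent: (a) for every h > 0 there exists C_h > 0 such that for every m ∈ ℕ: ∑_{j≥1} λ_j^{2m} a_j² ≤ C_h² · h^{2νm} · M_{νm}²; (b) for every L > 0 there exists C_L > 0 such that a_j ≤ C_L · exp(−M(L·λ_j^{1/ν})) for all j ≥ 1. -/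
/-- The associated function `M(r) = sup_{k ∈ ℕ} log ( r^{νk} / M_{νk} )`. -/
noncomputable def assocM (ν : ℕ) (Mk : ℕ → ℝ) (r : ℝ) : ℝ :=
  ⨆ k : ℕ, Real.log (r ^ (ν * k) / Mk (ν * k))

theorem aux_bdd (ν : ℕ) (Mk : ℕ → ℝ) (hMpos : ∀ k, 0 < Mk k)
    (hG : ∃ C₀ > (0 : ℝ), ∃ l > (0 : ℝ), ∀ k : ℕ, (k.factorial : ℝ) ≤ C₀ * l ^ k * Mk k)
    (r : ℝ) (hr : 0 < r) :
    BddAbove (Set.range fun k : ℕ => Real.log (r ^ (ν * k) / Mk (ν * k))) := by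
  obtain ⟨C₀, hC, l, hl, h⟩ := hG
  refine ⟨Real.log (C₀ * Real.exp (l * r)), ?_⟩
  rintro _ ⟨k, rfl⟩
  have hM := hMpos (ν * k)
  refine Real.log_le_log (by positivity) ?_
  have h1 := h (ν * k)
  have h2 := Real.pow_div_factorial_le_exp (l * r) (by positivity) (ν * k)
  have hf : (0 : ℝ) < ((ν * k).factorial : ℝ) := by positivity
  rw [div_le_iff₀ hf, mul_pow] at h2
  rw [div_le_iff₀ hM]
  have hlk : 0 < l ^ (ν * k) := by positivity
  have h3 := mul_le_mul_of_nonneg_left h1 (Real.exp_pos (l * r)).le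
  refine le_of_mul_le_mul_left ?_ hlk
  calc _ ≤ _ := h2
    _ ≤ _ := h3
    _ = _ := by ring

theorem aux_M1 (Mk : ℕ → ℝ) (hMpos : ∀ k, 0 < Mk k)
    (A H : ℝ) (hA : 1 ≤ A) (hH : 1 ≤ H)
    (hM1 : ∀ k : ℕ, Mk (k + 1) ≤ A * H ^ k * Mk k) (k Q : ℕ) :
    ∀ q ≤ Q, Mk (k + q) ≤ A ^ q * H ^ (q * (k + Q)) * Mk k := by
  intro q
  induction q with
  | zero => intro _; simp
  | succ q ih =>
    intro hq
    have h1 := ih (by omega)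
    have hA0 : 0 < A := by linarith
    have hH0 : 0 < H := by linarith
    have hM := hMpos k
    calc Mk (k + (q + 1)) ≤ A * H ^ (k + q) * Mk (k + q) := hM1 (k + q)
      _ ≤ A * H ^ (k + Q) * (A ^ q * H ^ (q * (k + Q)) * Mk k) := by
          gcongr
          · exact (hMpos _).le
          · omega
      _ = _ := by ring

theorem aux_pow (ν : ℕ) (hν : 1 ≤ ν) (L x : ℝ) (hx : 0 < x) (m : ℕ) :
    (L * x ^ (1 / (ν : ℝ))) ^ (ν * m) = L ^ (ν * m) * x ^ m := by
  rw [mul_pow, pow_mul (x ^ (1 / (ν : ℝ))), one_div,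
    Real.rpow_inv_natCast_pow hx.le (by omega)]

theorem stmt_16 (ν : ℕ) (hν : 1 ≤ ν) (Mk : ℕ → ℝ) (hMpos : ∀ k, 0 < Mk k)
    (hM0 : Mk 0 = 1)
    (A H : ℝ) (hA : 1 ≤ A) (hH : 1 ≤ H)
    (hM1 : ∀ k : ℕ, Mk (k + 1) ≤ A * H ^ k * Mk k)
    (hM2 : ∀ k : ℕ, Mk (2 * k) ≤ A * H ^ (2 * k) * Mk k ^ 2)
    (hG : ∃ C₀ > (0 : ℝ), ∃ l > (0 : ℝ), ∀ k : ℕ, (k.factorial : ℝ) ≤ C₀ * l ^ k * Mk k)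
    (lam a : ℕ → ℝ) (hlam : ∀ j, 0 < lam j) (hlb : ∀ j, lam 0 ≤ lam j)
    (ha : ∀ j, 0 ≤ a j)
    (p₀ : ℕ) (hp₀ : Summable (fun j => 1 / lam j ^ p₀)) :
    (∀ h : ℝ, 0 < h → ∃ Ch : ℝ, 0 < Ch ∧ ∀ m : ℕ,
        Summable (fun j => lam j ^ (2 * m) * a j ^ 2) ∧
        (∑' j, lam j ^ (2 * m) * a j ^ 2) ≤ Ch ^ 2 * h ^ (2 * ν * m) * Mk (ν * m) ^ 2) ↔
    (∀ L : ℝ, 0 < L → ∃ CL : ℝ, 0 < CL ∧ ∀ j,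
        a j ≤ CL * Real.exp (-(assocM ν Mk (L * lam j ^ (1 / (ν : ℝ)))))) := by
  constructor
  · intro hyp L hL
    obtain ⟨C, hC, h⟩ := hyp (1 / L) (by positivity)
    refine ⟨C, hC, fun j => ?_⟩
    rcases (ha j).eq_or_lt with h0 | h0
    · rw [← h0]; positivity
    have hx := hlam j
    have key : assocM ν Mk (L * lam j ^ (1 / (ν : ℝ))) ≤ Real.log (C / a j) := by
      refine ciSup_le fun m => ?_
      have hM := hMpos (ν * m)
      rw [aux_pow ν hν L _ hx]
      refine Real.log_le_log (by positivity) ?_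
      obtain ⟨hs, ht⟩ := h m
      have h1 : lam j ^ (2 * m) * a j ^ 2 ≤ _ :=
        (hs.le_tsum j (fun i _ => by have := hlam i; positivity)).trans ht
      have h2 : (lam j ^ m * a j) ^ 2 ≤ (C * (1 / L) ^ (ν * m) * Mk (ν * m)) ^ 2 := by
        calc _ = lam j ^ (2 * m) * a j ^ 2 := by ring
          _ ≤ _ := h1
          _ = _ := by ring
      have h3 := (pow_le_pow_iff_left₀ (by positivity) (by positivity) two_ne_zero).1 h2
      rw [div_le_div_iff₀ hM h0]
      calc L ^ (ν * m) * lam j ^ m * a j = L ^ (ν * m) * (lam j ^ m * a j) := by ring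
        _ ≤ L ^ (ν * m) * (C * (1 / L) ^ (ν * m) * Mk (ν * m)) := by gcongr
        _ = _ := by rw [one_div, inv_pow]; field_simp
    have h4 := Real.exp_le_exp.2 (neg_le_neg key)
    rw [Real.exp_neg (Real.log _), Real.exp_log (by positivity)] at h4
    rw [inv_div, div_le_iff₀ hC] at h4
    linarith
  · intro hyp h hh
    have hH0 : 0 < H := by linarith
    have hA0 : 0 < A := by linarith
    set q := ν * p₀ with hq
    obtain ⟨C, hC, hb⟩ := hyp (H ^ q / h) (by positivity)
    set S := ∑' j, 1 / lam j ^ p₀ with hS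
    have hS0 : 0 ≤ S := tsum_nonneg fun i => by have := hlam i; positivity
    have hl0 := hlam 0
    have bound : ∀ m j, lam j ^ (2 * m) * a j ^ 2 ≤
        ((C * A ^ q * h ^ q) ^ 2 / lam 0 ^ p₀ * h ^ (2 * ν * m) * Mk (ν * m) ^ 2)
          * (1 / lam j ^ p₀) := by
      intro m j
      have hx := hlam j
      have hM := hMpos (ν * m)
      have hM' := hMpos (ν * (m + p₀))
      have hr : 0 < H ^ q / h * lam j ^ (1 / (ν : ℝ)) := by positivity
      have h1 : Real.log _ ≤ assocM ν Mk (H ^ q / h * lam j ^ (1 / (ν : ℝ))) :=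
        le_ciSup (aux_bdd ν Mk hMpos hG _ hr) (m + p₀)
      have h2 := Real.exp_le_exp.2 (neg_le_neg h1)
      rw [Real.exp_neg (Real.log _), Real.exp_log (by positivity), aux_pow ν hν _ _ hx,
        inv_div] at h2
      have h3 := aux_M1 Mk hMpos A H hA hH hM1 (ν * m) q q le_rfl
      have e : ν * m + q = ν * (m + p₀) := by rw [hq]; ring
      rw [e] at h3
      have h4 : lam j ^ m * a j ≤ C * A ^ q * h ^ q * h ^ (ν * m) * Mk (ν * m) / lam j ^ p₀ := by
        calc lam j ^ m * a j ≤ lam j ^ m * (C * (A ^ q * H ^ (q * (ν * (m + p₀))) * Mk (ν * m) /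
              ((H ^ q / h) ^ (ν * (m + p₀)) * lam j ^ (m + p₀)))) := by
              gcongr
              refine (hb j).trans ?_
              gcongr
              refine h2.trans ?_
              gcongr
          _ = _ := by
              rw [← e, div_pow, ← pow_mul, pow_add h, pow_add (lam j)]
              field_simp
      have h5 : 1 / lam j ^ p₀ ≤ 1 / lam 0 ^ p₀ := by
        have := hlb j
        gcongr
      calc lam j ^ (2 * m) * a j ^ 2 = (lam j ^ m * a j) ^ 2 := by ring
        _ ≤ (C * A ^ q * h ^ q * h ^ (ν * m) * Mk (ν * m) / lam j ^ p₀) ^ 2 := by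
            have := ha j
            gcongr
        _ = (C * A ^ q * h ^ q * h ^ (ν * m) * Mk (ν * m)) ^ 2 *
            ((1 / lam j ^ p₀) * (1 / lam j ^ p₀)) := by ring
        _ ≤ (C * A ^ q * h ^ q * h ^ (ν * m) * Mk (ν * m)) ^ 2 *
            ((1 / lam 0 ^ p₀) * (1 / lam j ^ p₀)) := by gcongr
        _ = _ := by ring
    refine ⟨C * A ^ q * h ^ q * Real.sqrt (S / lam 0 ^ p₀ + 1), by positivity, fun m => ?_⟩
    have hsum : Summable (fun j => lam j ^ (2 * m) * a j ^ 2) :=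
      Summable.of_nonneg_of_le (fun j => by have := hlam j; positivity) (bound m)
        (hp₀.mul_left _)
    refine ⟨hsum, ?_⟩
    have h1 := hsum.tsum_le_tsum (bound m) (hp₀.mul_left _)
    rw [tsum_mul_left, ← hS] at h1
    have hM := hMpos (ν * m)
    rw [mul_pow _ (Real.sqrt _), Real.sq_sqrt (by positivity)]
    calc _ ≤ _ := h1
      _ = (C * A ^ q * h ^ q) ^ 2 * (S / lam 0 ^ p₀) * h ^ (2 * ν * m) * Mk (ν * m) ^ 2 := by ring
      _ ≤ _ := by
        gcongr
        linarith
end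

section
/- Let ν ≥ 1 be an integer and (M_k)_{k∈ℕ} a sequence of positive reals satisfying (M.0), (M.1) with constants A ≥ 1, H ≥ 1, and (G), with associated function M(r) := sup_{k∈ℕ} log(r^{νk}/M_{νk}). Then for every ε > 0 and every k ∈ ℕ there exist constants C > 0 and L > 0 such that for all t > 0: sup_{m∈ℕ} ε^m · t^{m+k} / M_{νm} ≤ C · exp(M(L·t^{1/ν})). -/
theorem aux_shift (Mk : ℕ → ℝ) (hMpos : ∀ k, 0 < Mk k)
    (A H : ℝ) (hA : 1 ≤ A) (hH : 1 ≤ H)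
    (hM1 : ∀ k : ℕ, Mk (k + 1) ≤ A * H ^ k * Mk k) (n j : ℕ) :
    Mk (n + j) ≤ A ^ j * H ^ (j * n + j * j) * Mk n := by
  induction j with
  | zero => simp
  | succ j ih =>
    have hA0 : 0 < A := by linarith
    have hH0 : 0 < H := by linarith
    have hn := hMpos n
    calc Mk (n + (j + 1)) ≤ A * H ^ (n + j) * Mk (n + j) := hM1 (n + j)
      _ ≤ A * H ^ (n + j) * (A ^ j * H ^ (j * n + j * j) * Mk n) := by gcongr
      _ = A ^ (j + 1) * H ^ (n + j + (j * n + j * j)) * Mk n := by ring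
      _ ≤ A ^ (j + 1) * H ^ ((j + 1) * n + (j + 1) * (j + 1)) * Mk n := by
        have := pow_le_pow_right₀ hH
          (show n + j + (j * n + j * j) ≤ (j + 1) * n + (j + 1) * (j + 1) by nlinarith)
        exact mul_le_mul_of_nonneg_right (mul_le_mul_of_nonneg_left this (by positivity)) hn.le

theorem aux_le (ν : ℕ) (Mk : ℕ → ℝ) (hMpos : ∀ k, 0 < Mk k)
    (hG : ∃ C₀ > (0 : ℝ), ∃ l > (0 : ℝ), ∀ k : ℕ, (k.factorial : ℝ) ≤ C₀ * l ^ k * Mk k)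
    (r : ℝ) (hr : 0 < r) (n : ℕ) :
    r ^ (ν * n) / Mk (ν * n) ≤ Real.exp (assocM ν Mk r) := by
  obtain ⟨C₀, hC, l, hl, h⟩ := hG
  have hpos : ∀ n, 0 < r ^ n / Mk n := fun n => div_pos (pow_pos hr n) (hMpos n)
  have hb : ∀ n, r ^ n / Mk n ≤ C₀ * Real.exp (l * r) := by
    intro n
    have h1 := Real.pow_div_factorial_le_exp (l * r) (by positivity) n
    have hf : (0 : ℝ) < n.factorial := by exact_mod_cast n.factorial_pos
    have hn := hMpos n
    rw [div_le_iff₀ hf] at h1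
    rw [div_le_iff₀ hn]
    have h2 := h n
    have h3 : (l * r) ^ n ≤ Real.exp (l * r) * (C₀ * l ^ n * Mk n) :=
      h1.trans (by gcongr)
    rw [mul_pow] at h3
    have hln : 0 < l ^ n := by positivity
    refine le_of_mul_le_mul_left (h3.trans (le_of_eq ?_)) hln
    ring
  have hbdd : BddAbove (Set.range fun k : ℕ => Real.log (r ^ (ν * k) / Mk (ν * k))) := by
    refine ⟨Real.log (C₀ * Real.exp (l * r)), ?_⟩
    rintro _ ⟨k, rfl⟩
    exact Real.log_le_log (hpos _) (hb _)
  rw [← Real.log_le_iff_le_exp (hpos _)]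
  exact le_ciSup hbdd n

theorem stmt_18 (ν : ℕ) (hν : 1 ≤ ν) (Mk : ℕ → ℝ) (hMpos : ∀ k, 0 < Mk k)
    (hM0 : Mk 0 = 1)
    (A H : ℝ) (hA : 1 ≤ A) (hH : 1 ≤ H)
    (hM1 : ∀ k : ℕ, Mk (k + 1) ≤ A * H ^ k * Mk k)
    (hG : ∃ C₀ > (0 : ℝ), ∃ l > (0 : ℝ), ∀ k : ℕ, (k.factorial : ℝ) ≤ C₀ * l ^ k * Mk k) :
    ∀ ε : ℝ, 0 < ε → ∀ k : ℕ, ∃ C > (0 : ℝ), ∃ L > (0 : ℝ), ∀ t : ℝ, 0 < t →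
      (⨆ m : ℕ, ε ^ m * t ^ (m + k) / Mk (ν * m)) ≤
        C * Real.exp (assocM ν Mk (L * t ^ (1 / (ν : ℝ)))) := by
  intro ε hε k
  have hA0 : 0 < A := by linarith
  have hH0 : 0 < H := by linarith
  obtain ⟨P, hP1, hP⟩ : ∃ P : ℝ, 1 ≤ P ∧ ε * H ^ (ν * k * ν) ≤ P :=
    ⟨max 1 (ε * H ^ (ν * k * ν)), le_max_left _ _, le_max_right _ _⟩
  have hP0 : 0 < P := by linarith
  refine ⟨A ^ (ν * k) * H ^ (ν * k * (ν * k)), by positivity, P, hP0, ?_⟩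
  intro t ht
  refine ciSup_le fun m => ?_
  have hs : 0 < t ^ (1 / (ν : ℝ)) := Real.rpow_pos_of_pos ht _
  have hst : (t ^ (1 / (ν : ℝ))) ^ ν = t := by
    rw [one_div]
    exact Real.rpow_inv_natCast_pow ht.le (by omega)
  have key := aux_le ν Mk hMpos hG (P * t ^ (1 / (ν : ℝ))) (by positivity) (m + k)
  refine le_trans ?_ (mul_le_mul_of_nonneg_left key (by positivity))
  have e1 : (P * t ^ (1 / (ν : ℝ))) ^ (ν * (m + k)) = P ^ (ν * (m + k)) * t ^ (m + k) := by
    rw [mul_pow, pow_mul (t ^ (1 / (ν : ℝ))), hst]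
  have hsh := aux_shift Mk hMpos A H hA hH hM1 (ν * m) (ν * k)
  rw [e1, mul_add ν m k]
  have p1 := hMpos (ν * m)
  have p2 := hMpos (ν * m + ν * k)
  rw [← mul_div_assoc, div_le_div_iff₀ p1 p2]
  have hpow : (ε * H ^ (ν * k * ν)) ^ m ≤ P ^ (ν * m + ν * k) :=
    (pow_le_pow_left₀ (by positivity) hP m).trans
      (pow_le_pow_right₀ hP1 (by nlinarith))
  calc ε ^ m * t ^ (m + k) * Mk (ν * m + ν * k)
      ≤ ε ^ m * t ^ (m + k) * (A ^ (ν * k) * H ^ (ν * k * (ν * m) + ν * k * (ν * k)) * Mk (ν * m)) := by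
        gcongr
    _ = A ^ (ν * k) * H ^ (ν * k * (ν * k)) * ((ε * H ^ (ν * k * ν)) ^ m * t ^ (m + k)) * Mk (ν * m) := by
        rw [mul_pow, ← pow_mul, pow_add H, mul_assoc (ν * k) ν m]
        ring
    _ ≤ _ := by gcongr
end
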